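/- Let α ∈ (1,2) and ρ ∈ (0,1) with ρ̂ := 1 - ρ, and assume αρ > 0 and αρ̂ > 0. Then for every γ > α - 1, the integral ∫₀^∞ e^{-γx} Φ̄(e^x) dx converges and equals (1/γ) Ψ(γ - α, αρ - 1, αρ̂ - 1). -/

import Mathlib

open MeasureTheory Real Set

/-- `Ψ(a,b,c) := ∫₀¹ u^a (1-u)^b (1+u)^c du`. -/
noncomputable def Psi (a b c : ℝ) : ℝ :=
  ∫ u in Ioo (0:ℝ) 1, u ^ a * (1 - u) ^ b * (1 + u) ^ c

/-- `Φ̄(z) := ∫₁^z (t-1)^{αρ-1} (t+1)^{αρ̂-1} dt`, with `ρ̂ = 1 - ρ`. -/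
noncomputable def PhiBar (α ρ : ℝ) (z : ℝ) : ℝ :=
  ∫ t in Ioc (1:ℝ) z, (t - 1) ^ (α * ρ - 1) * (t + 1) ^ (α * (1 - ρ) - 1)

/-!
Multiplying a primitive `x ↦ ∫₀ˣ f` by `exp (-γ x)` turns it into the convolution on the half-line
of `exp (-γ t) f t` with `exp (-γ t)`, and the integral of a convolution is the product of the
integrals; the second one contributes the factor `1 / γ`. The substitution `t = exp y` exhibits
`Φ̄ (exp x)` as such a primitive, and `u = exp (-y)` turns the first integral into `Ψ`.
-/

section Primitive

variable {E : Type*} [NormedAddCommGroup E] [NormedSpace ℝ E] {γ : ℝ} {f : ℝ → E}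

lemma exp_smul_intervalIntegral (γ : ℝ) (f : ℝ → E) (x : ℝ) :
    exp (-γ * x) • ∫ t in 0..x, f t =
      ∫ t in 0..x, exp (-γ * (x - t)) • exp (-γ * t) • f t := by
  rw [← intervalIntegral.integral_smul]
  refine intervalIntegral.integral_congr fun t _ ↦ ?_
  simp only [smul_smul, ← exp_add]
  ring_nf

lemma integrableOn_exp_smul_intervalIntegral (hγ : 0 < γ)
    (hf : IntegrableOn (fun t ↦ exp (-γ * t) • f t) (Ioi 0)) :
    IntegrableOn (fun x ↦ exp (-γ * x) • ∫ t in 0..x, f t) (Ioi 0) := by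
  have h := integrable_posConvolution hf (integrableOn_exp_mul_Ioi (neg_lt_zero.2 hγ) 0)
    (ContinuousLinearMap.lsmul ℝ ℝ).flip
  simpa only [posConvolution, integrable_indicator_iff measurableSet_Ioi,
    ContinuousLinearMap.flip_apply, ContinuousLinearMap.lsmul_apply,
    ← exp_smul_intervalIntegral] using h

lemma integral_exp_smul_intervalIntegral [CompleteSpace E] (hγ : 0 < γ)
    (hf : IntegrableOn (fun t ↦ exp (-γ * t) • f t) (Ioi 0)) :
    ∫ x in Ioi (0 : ℝ), exp (-γ * x) • ∫ t in 0..x, f t =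
      γ⁻¹ • ∫ t in Ioi (0 : ℝ), exp (-γ * t) • f t := by
  have exp_integral : ∫ x in Ioi (0 : ℝ), exp (-γ * x) = γ⁻¹ := by
    rw [integral_exp_mul_Ioi (neg_lt_zero.2 hγ), mul_zero, exp_zero, neg_div_neg_eq, one_div]
  have h := integral_posConvolution hf (integrableOn_exp_mul_Ioi (neg_lt_zero.2 hγ) 0)
    (ContinuousLinearMap.lsmul ℝ ℝ).flip
  simpa only [ContinuousLinearMap.flip_apply, ContinuousLinearMap.lsmul_apply,
    ← exp_smul_intervalIntegral, exp_integral] using h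

end Primitive

section ExpSubstitution

variable {E : Type*} [NormedAddCommGroup E] [NormedSpace ℝ E] {s : Set ℝ} {a : ℝ}

lemma integral_image_exp (hs : MeasurableSet s) (g : ℝ → E) :
    ∫ y in exp '' s, g y = ∫ x in s, exp x • g (exp x) := by
  simpa only [abs_exp] using integral_image_eq_integral_abs_deriv_smul hs
    (fun x _ ↦ (hasDerivAt_exp x).hasDerivWithinAt) exp_injective.injOn g

lemma integrableOn_image_exp (hs : MeasurableSet s) (g : ℝ → E) :
    IntegrableOn g (exp '' s) ↔ IntegrableOn (fun x ↦ exp x • g (exp x)) s := by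
  simpa only [abs_exp] using integrableOn_image_iff_integrableOn_abs_deriv_smul hs
    (fun x _ ↦ (hasDerivAt_exp x).hasDerivWithinAt) exp_injective.injOn g

lemma integral_comp_exp_neg_Ioi (g : ℝ → E) (a : ℝ) :
    ∫ x in Ioi a, exp (-x) • g (exp (-x)) = ∫ y in Ioo 0 (exp (-a)), g y := by
  rw [integral_comp_neg_Ioi a fun x ↦ exp x • g (exp x), integral_Iic_eq_integral_Iio,
    ← integral_image_exp measurableSet_Iio, image_exp_Iio]

lemma integrableOn_comp_exp_neg_Ioi {g : ℝ → E}
    (hg : IntegrableOn g (Ioo 0 (exp (-a)))) :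
    IntegrableOn (fun x ↦ exp (-x) • g (exp (-x))) (Ioi a) := by
  rw [← image_exp_Iio, integrableOn_image_exp measurableSet_Iio] at hg
  exact hg.comp_neg_Ioi

end ExpSubstitution

section Psi

variable {a b c : ℝ}

lemma integrableOn_rpow_mul_one_sub_rpow (ha : -1 < a) (hb : -1 < b) :
    IntegrableOn (fun u : ℝ ↦ u ^ a * (1 - u) ^ b) (Ioo 0 1) := by
  have beta_convergent := Complex.betaIntegral_convergent (u := (a + 1 : ℝ)) (v := (b + 1 : ℝ))
    (by rw [Complex.ofReal_re]; linarith) (by rw [Complex.ofReal_re]; linarith)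
  rw [intervalIntegrable_iff_integrableOn_Ioo_of_le zero_le_one] at beta_convergent
  refine IntegrableOn.congr_fun beta_convergent.norm (fun u ⟨hu₀, hu₁⟩ ↦ ?_) measurableSet_Ioo
  have cast_sub : 1 - (u : ℂ) = (1 - u : ℝ) := by push_cast; rfl
  rw [norm_mul, cast_sub, Complex.norm_cpow_eq_rpow_re_of_pos hu₀,
    Complex.norm_cpow_eq_rpow_re_of_pos (sub_pos.2 hu₁)]
  simp

lemma integrableOn_Psi_integrand (ha : -1 < a) (hb : -1 < b) :
    IntegrableOn (fun u : ℝ ↦ u ^ a * (1 - u) ^ b * (1 + u) ^ c) (Ioo 0 1) := by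
  have continuousOn_factor : ContinuousOn (fun u : ℝ ↦ (1 + u) ^ c) (Icc 0 1) :=
    ContinuousOn.rpow_const (by fun_prop) fun u hu ↦ Or.inl (by linarith [hu.1])
  have beta_integrable := integrableOn_rpow_mul_one_sub_rpow ha hb
  rw [← integrableOn_Icc_iff_integrableOn_Ioo] at beta_integrable ⊢
  exact beta_integrable.mul_continuousOn continuousOn_factor isCompact_Icc

lemma exp_sub_one_rpow {x : ℝ} (hx : 0 ≤ x) (b : ℝ) :
    (exp x - 1) ^ b = exp (b * x) * (1 - exp (-x)) ^ b := by
  have factor : exp x - 1 = exp x * (1 - exp (-x)) := by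
    rw [mul_sub, ← exp_add, add_neg_cancel, exp_zero, mul_one]
  rw [factor, mul_rpow (exp_pos x).le (sub_nonneg.2 (exp_le_one_iff.2 (neg_nonpos.2 hx))),
    ← exp_mul, mul_comm x]

lemma exp_add_one_rpow (x c : ℝ) :
    (exp x + 1) ^ c = exp (c * x) * (1 + exp (-x)) ^ c := by
  have factor : exp x + 1 = exp x * (1 + exp (-x)) := by
    rw [mul_add, ← exp_add, add_neg_cancel, exp_zero, mul_one]
  rw [factor, mul_rpow (exp_pos x).le (by positivity), ← exp_mul, mul_comm x]

lemma exp_mul_PhiBar_integrand_eq_Psi_integrand {γ x : ℝ} (hx : 0 ≤ x) (h : a + b + c + 2 = γ) :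
    exp (-γ * x) * (exp x * ((exp x - 1) ^ b * (exp x + 1) ^ c)) =
      exp (-x) * (exp (-x) ^ a * (1 - exp (-x)) ^ b * (1 + exp (-x)) ^ c) := by
  have exponents : exp (-γ * x) * exp x * exp (b * x) * exp (c * x) = exp (-x) * exp (-x * a) := by
    simp only [← exp_add, ← h]
    ring_nf
  rw [exp_sub_one_rpow hx, exp_add_one_rpow, ← exp_mul]
  linear_combination (1 - exp (-x)) ^ b * (1 + exp (-x)) ^ c * exponents

lemma integrableOn_exp_mul_PhiBar_integrand {γ : ℝ} (ha : -1 < a) (hb : -1 < b)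
    (h : a + b + c + 2 = γ) :
    IntegrableOn (fun x ↦ exp (-γ * x) * (exp x * ((exp x - 1) ^ b * (exp x + 1) ^ c)))
      (Ioi 0) := by
  have psi_integrable : IntegrableOn (fun u : ℝ ↦ u ^ a * (1 - u) ^ b * (1 + u) ^ c)
      (Ioo 0 (exp (-0))) := by
    simpa only [neg_zero, exp_zero] using integrableOn_Psi_integrand ha hb
  exact (integrableOn_comp_exp_neg_Ioi psi_integrable).congr_fun
    (fun x hx ↦ (exp_mul_PhiBar_integrand_eq_Psi_integrand (le_of_lt hx) h).symm) measurableSet_Ioi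

lemma integral_exp_mul_PhiBar_integrand {γ : ℝ} (h : a + b + c + 2 = γ) :
    ∫ x in Ioi (0 : ℝ), exp (-γ * x) * (exp x * ((exp x - 1) ^ b * (exp x + 1) ^ c)) =
      Psi a b c := by
  rw [setIntegral_congr_fun measurableSet_Ioi
    fun x hx ↦ exp_mul_PhiBar_integrand_eq_Psi_integrand (le_of_lt hx) h]
  simpa only [neg_zero, exp_zero, smul_eq_mul, Psi] using
    integral_comp_exp_neg_Ioi (fun u : ℝ ↦ u ^ a * (1 - u) ^ b * (1 + u) ^ c) 0

end Psi

lemma PhiBar_exp (α ρ : ℝ) {x : ℝ} (hx : 0 ≤ x) :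
    PhiBar α ρ (exp x) =
      ∫ t in 0..x, exp t * ((exp t - 1) ^ (α * ρ - 1) * (exp t + 1) ^ (α * (1 - ρ) - 1)) := by
  rw [PhiBar, ← exp_zero, ← image_exp_Ioc, integral_image_exp measurableSet_Ioc,
    intervalIntegral.integral_of_le hx]
  simp only [smul_eq_mul, exp_zero]

theorem stmt_2_general (α ρ γ : ℝ) (hαρ : 0 < α * ρ) (hγ₀ : 0 < γ) (hγ : α - 1 < γ) :
    IntegrableOn (fun x ↦ exp (-γ * x) * PhiBar α ρ (exp x)) (Ioi 0) ∧
    ∫ x in Ioi (0 : ℝ), exp (-γ * x) * PhiBar α ρ (exp x) =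
      1 / γ * Psi (γ - α) (α * ρ - 1) (α * (1 - ρ) - 1) := by
  have exponent_sum : γ - α + (α * ρ - 1) + (α * (1 - ρ) - 1) + 2 = γ := by ring
  have integrable_factor := integrableOn_exp_mul_PhiBar_integrand (a := γ - α) (b := α * ρ - 1)
    (by linarith) (by linarith) exponent_sum
  have primitive : EqOn (fun x ↦ exp (-γ * x) * PhiBar α ρ (exp x))
      (fun x ↦ exp (-γ * x) • ∫ t in 0..x,
        exp t * ((exp t - 1) ^ (α * ρ - 1) * (exp t + 1) ^ (α * (1 - ρ) - 1))) (Ioi 0) :=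
    fun x hx ↦ by simp only [PhiBar_exp α ρ (le_of_lt hx), smul_eq_mul]
  constructor
  · exact (integrableOn_exp_smul_intervalIntegral hγ₀ integrable_factor).congr_fun
      primitive.symm measurableSet_Ioi
  · rw [setIntegral_congr_fun measurableSet_Ioi primitive,
      integral_exp_smul_intervalIntegral hγ₀ integrable_factor, ← one_div]
    simp only [smul_eq_mul, integral_exp_mul_PhiBar_integrand exponent_sum]

theorem stmt_2 (α ρ : ℝ) (hα : α ∈ Ioo (1:ℝ) 2) (hρ : ρ ∈ Ioo (0:ℝ) 1)
    (hαρ : 0 < α * ρ) (hαρ' : 0 < α * (1 - ρ)) (γ : ℝ) (hγ : α - 1 < γ) :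
    IntegrableOn (fun x : ℝ => Real.exp (-γ * x) * PhiBar α ρ (Real.exp x)) (Ioi (0:ℝ)) ∧
    (∫ x in Ioi (0:ℝ), Real.exp (-γ * x) * PhiBar α ρ (Real.exp x))
      = (1 / γ) * Psi (γ - α) (α * ρ - 1) (α * (1 - ρ) - 1) :=
  stmt_2_general α ρ γ hαρ (by linarith [hα.1]) hγ
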